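/- Let d be a differential on a polarized bigraded Hodge–Lefschetz structure (H, N₁, N₂, ψ). Then: (i) the codifferential d* is adjoint to d with respect to φ, i.e., φ(x, d*y) = φ(dx, y) for all x, y ∈ H; (ii) the Laplacian Δ is symmetric with respect to φ, i.e., φ(Δx, y) = φ(x, Δy) for all x, y; (iii) for every pair (a, b), ker(d) ∩ H_{a,b} = (ker(Δ) ∩ H_{a,b}) ⊕ (im(d) ∩ H_{a,b}), and this direct sum decomposition is orthogonal with respect to φ. -/

import Mathlib

namespace HLS

variable {H : Type} [AddCommGroup H] [Module ℝ H]

/-- The primitive part `P_{a,b} = H_{a,b} ∩ ker(N₁^{a+1}) ∩ ker(N₂^{b+1})`, for `a, b ≥ 0`. -/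
def prim (Hgr : ℤ → ℤ → Submodule ℝ H) (N₁ N₂ : H →ₗ[ℝ] H) (a b : ℕ) : Submodule ℝ H :=
  Hgr (a : ℤ) (b : ℤ) ⊓ LinearMap.ker (N₁ ^ (a + 1)) ⊓ LinearMap.ker (N₂ ^ (b + 1))

/-- A bigraded Hodge–Lefschetz structure: a finite-dimensional real vector space `H`,
a direct sum decomposition `H = ⨁_{(a,b)} H_{a,b}`, and commuting operators `N₁, N₂` of
bidegrees `(-2,0)` and `(0,-2)` with `N₁^a : H_{a,b} → H_{-a,b}` and
`N₂^b : H_{a,b} → H_{a,-b}` isomorphisms for `a ≥ 0`, resp. `b ≥ 0`. -/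
structure IsHL (Hgr : ℤ → ℤ → Submodule ℝ H) (N₁ N₂ : H →ₗ[ℝ] H) : Prop where
  findim : FiniteDimensional ℝ H
  internal : DirectSum.IsInternal (fun p : ℤ × ℤ => Hgr p.1 p.2)
  mapN₁ : ∀ a b : ℤ, ∀ x ∈ Hgr a b, N₁ x ∈ Hgr (a - 2) b
  mapN₂ : ∀ a b : ℤ, ∀ x ∈ Hgr a b, N₂ x ∈ Hgr a (b - 2)
  comm : N₁ ∘ₗ N₂ = N₂ ∘ₗ N₁
  bijN₁ : ∀ (a : ℕ) (b : ℤ),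
    Submodule.map (N₁ ^ a) (Hgr (a : ℤ) b) = Hgr (-(a : ℤ)) b ∧
    ∀ x ∈ Hgr (a : ℤ) b, (N₁ ^ a) x = 0 → x = 0
  bijN₂ : ∀ (a : ℤ) (b : ℕ),
    Submodule.map (N₂ ^ b) (Hgr a (b : ℤ)) = Hgr a (-(b : ℤ)) ∧
    ∀ x ∈ Hgr a (b : ℤ), (N₂ ^ b) x = 0 → x = 0

/-- A polarization on a bigraded Hodge–Lefschetz structure. -/
structure IsPolarization (Hgr : ℤ → ℤ → Submodule ℝ H) (N₁ N₂ : H →ₗ[ℝ] H)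
    (ψ : H →ₗ[ℝ] H →ₗ[ℝ] ℝ) : Prop where
  orth : ∀ a b a' b' : ℤ, ¬ (a + a' = 0 ∧ b + b' = 0) →
    ∀ x ∈ Hgr a b, ∀ y ∈ Hgr a' b', ψ x y = 0
  primSymm : ∀ a b : ℕ, ∀ x ∈ prim Hgr N₁ N₂ a b, ∀ y ∈ prim Hgr N₁ N₂ a b,
    ψ x (((N₁ ^ a) ∘ₗ (N₂ ^ b)) y) = ψ y (((N₁ ^ a) ∘ₗ (N₂ ^ b)) x)
  primPosDef : ∀ a b : ℕ, ∀ x ∈ prim Hgr N₁ N₂ a b, x ≠ 0 →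
    0 < ψ x (((N₁ ^ a) ∘ₗ (N₂ ^ b)) x)
  skew₁ : ∀ x y : H, ψ (N₁ x) y + ψ x (N₁ y) = 0
  skew₂ : ∀ x y : H, ψ (N₂ x) y + ψ x (N₂ y) = 0

/-- The defining property of the operator `w`:
`w(N₁^r N₂^s x) = (-1)^{r+s} (r!/(a-r)!)(s!/(b-s)!) N₁^{a-r} N₂^{b-s} x` for `x ∈ P_{a,b}`,
`r ≤ a`, `s ≤ b`, and `w(N₁^r N₂^s x) = 0` otherwise.  (By the primitive decomposition this
determines `w` uniquely.) -/
def IsW (Hgr : ℤ → ℤ → Submodule ℝ H) (N₁ N₂ : H →ₗ[ℝ] H) (w : H →ₗ[ℝ] H) : Prop :=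
  ∀ a b r s : ℕ, ∀ x ∈ prim Hgr N₁ N₂ a b,
    w (((N₁ ^ r) ∘ₗ (N₂ ^ s)) x) =
      if r ≤ a ∧ s ≤ b then
        ((-1 : ℝ) ^ (r + s) * ((r.factorial : ℝ) / ((a - r).factorial : ℝ)) *
          ((s.factorial : ℝ) / ((b - s).factorial : ℝ))) •
          (((N₁ ^ (a - r)) ∘ₗ (N₂ ^ (b - s))) x)
      else 0

/-- A differential on a polarized bigraded Hodge–Lefschetz structure. -/
structure IsDifferential (Hgr : ℤ → ℤ → Submodule ℝ H) (N₁ N₂ : H →ₗ[ℝ] H)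
    (ψ : H →ₗ[ℝ] H →ₗ[ℝ] ℝ) (dd : H →ₗ[ℝ] H) : Prop where
  mem : ∀ a b : ℤ, ∀ x ∈ Hgr a b, dd x ∈ Hgr (a - 1) (b - 1)
  sq : ∀ x, dd (dd x) = 0
  commN₁ : dd ∘ₗ N₁ = N₁ ∘ₗ dd
  commN₂ : dd ∘ₗ N₂ = N₂ ∘ₗ dd
  skew : ∀ x y : H, ψ (dd x) y + ψ x (dd y) = 0

/-- The codifferential `d* = - w⁻¹ ∘ d ∘ w`. -/
def dstar (w winv dd : H →ₗ[ℝ] H) : H →ₗ[ℝ] H := -(winv ∘ₗ dd ∘ₗ w)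

/-- The Laplacian `Δ = d d* + d* d`. -/
def lap (w winv dd : H →ₗ[ℝ] H) : H →ₗ[ℝ] H :=
  dd ∘ₗ dstar w winv dd + dstar w winv dd ∘ₗ dd

end HLS

namespace HLS

variable {H : Type} [AddCommGroup H] [Module ℝ H]

theorem pow_mem_gr (V : ℤ → Submodule ℝ H) (N : H →ₗ[ℝ] H)
    (hN : ∀ k, ∀ x ∈ V k, N x ∈ V (k - 2)) (n : ℕ) :
    ∀ k, ∀ x ∈ V k, (N ^ n) x ∈ V (k - 2 * n) := by
  induction n with
  | zero => intro k x hx; simpa using hx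
  | succ n ih =>
    intro k x hx
    rw [pow_succ', Module.End.mul_apply]
    have := hN _ _ (ih k x hx)
    have e : k - 2 * ((n + 1 : ℕ) : ℤ) = k - 2 * n - 2 := by push_cast; ring
    rwa [e]

theorem pow_zero_of_le (N : H →ₗ[ℝ] H) {x : H} {m n : ℕ} (h : (N ^ m) x = 0) (hmn : m ≤ n) :
    (N ^ n) x = 0 := by
  obtain ⟨k, rfl⟩ := Nat.exists_eq_add_of_le hmn
  rw [add_comm, pow_add, Module.End.mul_apply, h, map_zero]

theorem lef_nonneg (V : ℤ → Submodule ℝ H) (N : H →ₗ[ℝ] H)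
    (hN : ∀ k, ∀ x ∈ V k, N x ∈ V (k - 2))
    (hs : ∀ a : ℕ, ∀ y ∈ V (-(a : ℤ)), ∃ x ∈ V a, (N ^ a) x = y)
    (B : ℕ) (hB : ∀ k : ℕ, B < k → V k = ⊥) (n : ℕ) :
    ∀ k : ℕ, B < k + n → ∀ S : Submodule ℝ H,
    (∀ a r : ℕ, (a : ℤ) - 2 * r = k → ∀ x ∈ V a, (N ^ (a + 1)) x = 0 → (N ^ r) x ∈ S) →
    V k ≤ S := by
  induction n with
  | zero => intro k hk S _; rw [hB k (by omega)]; exact bot_le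
  | succ n ih =>
    intro k hk S h x hx
    have h1 : (N ^ (k + 1)) x ∈ V (-((k + 2 : ℕ) : ℤ)) := by
      have := pow_mem_gr V N hN (k + 1) _ x hx
      convert this using 2
      push_cast; ring
    obtain ⟨y, hy, hyx⟩ := hs _ _ h1
    have h2 : N y ∈ V k := by
      have := hN _ _ hy
      convert this using 2
      push_cast; ring
    have h3 : x - N y ∈ S := by
      have := h k 0 (by simp) (x - N y) (Submodule.sub_mem _ hx h2) (by
        rw [map_sub, ← Module.End.mul_apply, ← pow_succ, hyx, sub_self])
      simpa using this
    have h4 : N y ∈ S := by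
      refine ih (k + 2) (by omega) (S.comap N) ?_ hy
      intro a r har z hz hz0
      have := h a (r + 1) (by push_cast at har ⊢; linarith) z hz hz0
      rwa [pow_succ', Module.End.mul_apply] at this
    simpa using S.add_mem h3 h4

theorem lef (V : ℤ → Submodule ℝ H) (N : H →ₗ[ℝ] H)
    (hN : ∀ k, ∀ x ∈ V k, N x ∈ V (k - 2))
    (hs : ∀ a : ℕ, ∀ y ∈ V (-(a : ℤ)), ∃ x ∈ V a, (N ^ a) x = y)
    (B : ℕ) (hB : ∀ k : ℕ, B < k → V k = ⊥) (k : ℤ) (S : Submodule ℝ H)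
    (h : ∀ a r : ℕ, r ≤ a → (a : ℤ) - 2 * r = k → ∀ x ∈ V a, (N ^ (a + 1)) x = 0 →
      (N ^ r) x ∈ S) :
    V k ≤ S := by
  have h' : ∀ a r : ℕ, (a : ℤ) - 2 * r = k → ∀ x ∈ V a, (N ^ (a + 1)) x = 0 →
      (N ^ r) x ∈ S := by
    intro a r har x hx hx0
    by_cases hr : r ≤ a
    · exact h a r hr har x hx hx0
    · rw [pow_zero_of_le N hx0 (by omega)]; exact S.zero_mem
  obtain ⟨m, rfl | rfl⟩ := k.eq_nat_or_neg
  · exact lef_nonneg V N hN hs B hB (B + 1) m (by omega) S h'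
  · intro x hx
    obtain ⟨y, hy, rfl⟩ := hs _ _ hx
    refine lef_nonneg V N hN hs B hB (B + 1) m (by omega) (S.comap (N ^ m)) ?_ hy
    intro a r har z hz hz0
    have := h' a (m + r) (by push_cast; linarith) z hz hz0
    rwa [pow_add, Module.End.mul_apply] at this

theorem exists_bound {Hgr : ℤ → ℤ → Submodule ℝ H} {N₁ N₂ : H →ₗ[ℝ] H}
    (hHL : IsHL Hgr N₁ N₂) :
    ∃ B : ℕ, ∀ k l : ℤ, ((B : ℤ) < k ∨ (B : ℤ) < l) → Hgr k l = ⊥ := by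
  have := hHL.findim
  have hfin := WellFoundedGT.finite_ne_bot_of_iSupIndep hHL.internal.submodule_iSupIndep
  obtain ⟨B1, hB1⟩ := (hfin.image (fun p : ℤ × ℤ => p.1)).bddAbove
  obtain ⟨B2, hB2⟩ := (hfin.image (fun p : ℤ × ℤ => p.2)).bddAbove
  refine ⟨(max B1 B2).toNat, fun k l hkl => ?_⟩
  by_contra hne
  have h1 : k ≤ B1 := hB1 ⟨(k, l), hne, rfl⟩
  have h2 : l ≤ B2 := hB2 ⟨(k, l), hne, rfl⟩
  omega

theorem pow_comm_apply {N₁ N₂ : H →ₗ[ℝ] H} (h : N₁ ∘ₗ N₂ = N₂ ∘ₗ N₁) (r s : ℕ) (x : H) :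
    (N₂ ^ s) ((N₁ ^ r) x) = (N₁ ^ r) ((N₂ ^ s) x) := by
  have hc : Commute N₂ N₁ := h.symm
  have := (hc.pow_pow s r).eq
  exact LinearMap.congr_fun this x

theorem span_hom {Hgr : ℤ → ℤ → Submodule ℝ H} {N₁ N₂ : H →ₗ[ℝ] H}
    (hHL : IsHL Hgr N₁ N₂) (k l : ℤ) (S : Submodule ℝ H)
    (h : ∀ a b r s : ℕ, r ≤ a → s ≤ b → (a : ℤ) - 2 * r = k → (b : ℤ) - 2 * s = l →
      ∀ p ∈ prim Hgr N₁ N₂ a b, (N₁ ^ r) ((N₂ ^ s) p) ∈ S) : Hgr k l ≤ S := by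
  obtain ⟨B, hB⟩ := exists_bound hHL
  refine lef (fun k => Hgr k l) N₁ (fun k x hx => hHL.mapN₁ k l x hx) ?_ B
    (fun k hk => hB k l (by omega)) k S ?_
  · intro a y hy
    have hy' := hy
    simp only [← (hHL.bijN₁ a l).1] at hy'
    exact hy'
  intro a r hra hak x hx hx0
  have key := lef (fun l => Hgr a l ⊓ LinearMap.ker (N₁ ^ (a + 1))) N₂ ?_ ?_ B ?_ l
    (S.comap (N₁ ^ r)) ?_
  · exact key ⟨hx, hx0⟩
  · rintro l x ⟨hx, hx0⟩
    refine ⟨hHL.mapN₂ _ _ _ hx, ?_⟩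
    have := pow_comm_apply hHL.comm (a + 1) 1 x
    rw [pow_one] at this
    rw [SetLike.mem_coe, LinearMap.mem_ker, ← this, LinearMap.mem_ker.1 hx0, map_zero]
  · rintro b y ⟨hy, hy0⟩
    rw [← (hHL.bijN₂ a b).1] at hy
    obtain ⟨z, hz, rfl⟩ := hy
    refine ⟨z, ⟨hz, ?_⟩, rfl⟩
    refine (hHL.bijN₂ ((a : ℤ) - 2 * ((a + 1 : ℕ) : ℤ)) b).2 _ ?_ ?_
    · exact pow_mem_gr (fun k => Hgr k b) N₁ (fun k x hx => hHL.mapN₁ k b x hx) (a + 1) a z hz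
    · rw [pow_comm_apply hHL.comm]; exact hy0
  · intro k hk
    rw [hB a k (by omega), bot_inf_eq]
  · rintro b s hsb hbl p ⟨hp, hp0⟩ hp1
    exact h a b r s hra hsb hak hbl p ⟨⟨hp, hp0⟩, hp1⟩

theorem psi_move {Hgr : ℤ → ℤ → Submodule ℝ H} {N₁ N₂ : H →ₗ[ℝ] H}
    {ψ : H →ₗ[ℝ] H →ₗ[ℝ] ℝ} (hψ : IsPolarization Hgr N₁ N₂ ψ) (r s : ℕ) (x y : H) :
    ψ ((N₁ ^ r) ((N₂ ^ s) x)) y = (-1) ^ (r + s) * ψ x ((N₂ ^ s) ((N₁ ^ r) y)) := by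
  have gen : ∀ (N : H →ₗ[ℝ] H), (∀ x y : H, ψ (N x) y + ψ x (N y) = 0) →
      ∀ (n : ℕ) (x y : H), ψ ((N ^ n) x) y = (-1) ^ n * ψ x ((N ^ n) y) := by
    intro N hN n
    induction n with
    | zero => intro x y; simp
    | succ n ih =>
      intro x y
      rw [pow_succ, Module.End.mul_apply, ih, eq_neg_of_add_eq_zero_left (hN _ _), pow_succ (-1 : ℝ),
        ← Module.End.mul_apply, ← pow_succ', pow_succ]
      ring
  rw [gen N₁ hψ.skew₁, gen N₂ hψ.skew₂, pow_add]
  ring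

theorem prim_orth {Hgr : ℤ → ℤ → Submodule ℝ H} {N₁ N₂ : H →ₗ[ℝ] H}
    (hHL : IsHL Hgr N₁ N₂)
    {ψ : H →ₗ[ℝ] H →ₗ[ℝ] ℝ} (hψ : IsPolarization Hgr N₁ N₂ ψ) {a b a' b' : ℕ} {p q : H}
    (hp : p ∈ prim Hgr N₁ N₂ a b) (hq : q ∈ prim Hgr N₁ N₂ a' b') (m n : ℕ)
    (hne : ψ p ((N₁ ^ m) ((N₂ ^ n) q)) ≠ 0) : m = a ∧ m = a' ∧ n = b ∧ n = b' := by
  obtain ⟨⟨hp, hp1⟩, hp2⟩ := hp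
  obtain ⟨⟨hq, hq1⟩, hq2⟩ := hq
  rw [SetLike.mem_coe, LinearMap.mem_ker] at hp1 hp2 hq1 hq2
  have hma' : m ≤ a' := by
    by_contra hlt
    apply hne
    rw [← pow_comm_apply hHL.comm, pow_zero_of_le N₁ hq1 (by omega)]; simp
  have hnb' : n ≤ b' := by
    by_contra hlt
    apply hne
    rw [pow_zero_of_le N₂ hq2 (by omega)]; simp
  have hmv := psi_move hψ m n p q
  rw [pow_comm_apply hHL.comm] at hmv
  have hne' : ψ ((N₁ ^ m) ((N₂ ^ n) p)) q ≠ 0 := by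
    rw [hmv]; exact mul_ne_zero (pow_ne_zero _ (by norm_num)) hne
  have hma : m ≤ a := by
    by_contra hlt
    apply hne'
    rw [← pow_comm_apply hHL.comm, pow_zero_of_le N₁ hp1 (by omega)]; simp
  have hnb : n ≤ b := by
    by_contra hlt
    apply hne'
    rw [pow_zero_of_le N₂ hp2 (by omega)]; simp
  have hmem : (N₁ ^ m) ((N₂ ^ n) q) ∈ Hgr ((a' : ℤ) - 2 * m) ((b' : ℤ) - 2 * n) :=
    pow_mem_gr (fun k => Hgr k ((b' : ℤ) - 2 * n)) N₁ (fun k x hx => hHL.mapN₁ k _ x hx) m _ _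
      (pow_mem_gr (fun k => Hgr a' k) N₂ (fun k x hx => hHL.mapN₂ _ k x hx) n _ _ hq)
  have hdeg : (a : ℤ) + (a' - 2 * m) = 0 ∧ (b : ℤ) + (b' - 2 * n) = 0 := by
    by_contra hc
    exact hne (hψ.orth _ _ _ _ hc _ hp _ hmem)
  omega

/-- the coefficient appearing in `w` -/
noncomputable def cw (a b r s : ℕ) : ℝ :=
  ((r.factorial : ℝ) / ((a - r).factorial : ℝ)) * ((s.factorial : ℝ) / ((b - s).factorial : ℝ))

theorem cw_pos (a b r s : ℕ) : 0 < cw a b r s := by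
  unfold cw; positivity

theorem w_apply {Hgr : ℤ → ℤ → Submodule ℝ H} {N₁ N₂ w : H →ₗ[ℝ] H}
    (hw : IsW Hgr N₁ N₂ w) {a b r s : ℕ} (hr : r ≤ a) (hs : s ≤ b) {p : H}
    (hp : p ∈ prim Hgr N₁ N₂ a b) :
    w ((N₁ ^ r) ((N₂ ^ s) p)) =
      ((-1 : ℝ) ^ (r + s) * cw a b r s) • ((N₁ ^ (a - r)) ((N₂ ^ (b - s)) p)) := by
  have := hw a b r s p hp
  rw [if_pos ⟨hr, hs⟩] at this
  simpa [cw, mul_assoc] using this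

theorem phi_gen {Hgr : ℤ → ℤ → Submodule ℝ H} {N₁ N₂ w : H →ₗ[ℝ] H}
    (hHL : IsHL Hgr N₁ N₂)
    {ψ : H →ₗ[ℝ] H →ₗ[ℝ] ℝ} (hψ : IsPolarization Hgr N₁ N₂ ψ)
    (hw : IsW Hgr N₁ N₂ w) {a b r s a' b' r' s' : ℕ} (hr' : r' ≤ a') (hs' : s' ≤ b') {p q : H}
    (hq : q ∈ prim Hgr N₁ N₂ a' b') :
    ψ ((N₁ ^ r) ((N₂ ^ s) p)) (w ((N₁ ^ r') ((N₂ ^ s') q))) =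
      (-1) ^ (r + s) * (-1) ^ (r' + s') * cw a' b' r' s' *
        ψ p ((N₁ ^ (r + (a' - r'))) ((N₂ ^ (s + (b' - s'))) q)) := by
  rw [psi_move hψ, w_apply hw hr' hs' hq, map_smul, map_smul, map_smul, ← Module.End.mul_apply (N₁ ^ r),
    ← pow_add, pow_comm_apply hHL.comm, ← Module.End.mul_apply (N₂ ^ s), ← pow_add, smul_eq_mul]
  ring

theorem phi_diag {Hgr : ℤ → ℤ → Submodule ℝ H} {N₁ N₂ w : H →ₗ[ℝ] H}
    (hHL : IsHL Hgr N₁ N₂)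
    {ψ : H →ₗ[ℝ] H →ₗ[ℝ] ℝ} (hψ : IsPolarization Hgr N₁ N₂ ψ)
    (hw : IsW Hgr N₁ N₂ w) {a b r s : ℕ} (hr : r ≤ a) (hs : s ≤ b) {p q : H}
    (hq : q ∈ prim Hgr N₁ N₂ a b) :
    ψ ((N₁ ^ r) ((N₂ ^ s) p)) (w ((N₁ ^ r) ((N₂ ^ s) q))) =
      cw a b r s * ψ p (((N₁ ^ a) ∘ₗ (N₂ ^ b)) q) := by
  rw [phi_gen (a := a) (b := b) hHL hψ hw hr hs hq, ← mul_pow, Nat.add_sub_cancel' hr,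
    Nat.add_sub_cancel' hs]
  simp

/-- homogeneous primitive pieces -/
def piece (Hgr : ℤ → ℤ → Submodule ℝ H) (N₁ N₂ : H →ₗ[ℝ] H) (i : (ℕ × ℕ) × (ℕ × ℕ)) :
    Submodule ℝ H :=
  (prim Hgr N₁ N₂ i.1.1 i.1.2).map ((N₁ ^ i.2.1) ∘ₗ (N₂ ^ i.2.2))

theorem piece_cases {Hgr : ℤ → ℤ → Submodule ℝ H} {N₁ N₂ : H →ₗ[ℝ] H}
    (hHL : IsHL Hgr N₁ N₂) {i : (ℕ × ℕ) × (ℕ × ℕ)} {x : H} (hx : x ∈ piece Hgr N₁ N₂ i) :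
    x = 0 ∨ (i.2.1 ≤ i.1.1 ∧ i.2.2 ≤ i.1.2 ∧ ∃ p ∈ prim Hgr N₁ N₂ i.1.1 i.1.2,
      x = (N₁ ^ i.2.1) ((N₂ ^ i.2.2) p)) := by
  obtain ⟨p, hp, rfl⟩ := hx
  have hp' := hp
  obtain ⟨⟨-, hp1⟩, hp2⟩ := hp
  rw [SetLike.mem_coe, LinearMap.mem_ker] at hp1 hp2
  by_cases h1 : i.2.1 ≤ i.1.1
  · by_cases h2 : i.2.2 ≤ i.1.2
    · exact Or.inr ⟨h1, h2, p, hp', rfl⟩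
    · left
      rw [LinearMap.comp_apply, pow_zero_of_le N₂ hp2 (by omega), map_zero]
  · left
    rw [LinearMap.comp_apply, ← pow_comm_apply hHL.comm, pow_zero_of_le N₁ hp1 (by omega), map_zero]

theorem piece_top {Hgr : ℤ → ℤ → Submodule ℝ H} {N₁ N₂ : H →ₗ[ℝ] H}
    (hHL : IsHL Hgr N₁ N₂) : ⨆ i, piece Hgr N₁ N₂ i = ⊤ := by
  rw [eq_top_iff, ← hHL.internal.submodule_iSup_eq_top]
  refine iSup_le fun kl => span_hom hHL _ _ _ ?_
  intro a b r s _ _ _ _ p hp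
  exact (le_iSup (piece Hgr N₁ N₂) ((a, b), (r, s))) ⟨p, hp, rfl⟩

theorem piece_orth {Hgr : ℤ → ℤ → Submodule ℝ H} {N₁ N₂ w : H →ₗ[ℝ] H}
    (hHL : IsHL Hgr N₁ N₂)
    {ψ : H →ₗ[ℝ] H →ₗ[ℝ] ℝ} (hψ : IsPolarization Hgr N₁ N₂ ψ)
    (hw : IsW Hgr N₁ N₂ w) {i j : (ℕ × ℕ) × (ℕ × ℕ)} (hij : i ≠ j) {x y : H}
    (hx : x ∈ piece Hgr N₁ N₂ i) (hy : y ∈ piece Hgr N₁ N₂ j) : ψ x (w y) = 0 := by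
  rcases piece_cases hHL hx with rfl | ⟨h1, h2, p, hp, rfl⟩
  · simp
  rcases piece_cases hHL hy with rfl | ⟨h3, h4, q, hq, rfl⟩
  · simp
  obtain ⟨⟨a, b⟩, ⟨r, s⟩⟩ := i
  obtain ⟨⟨a', b'⟩, ⟨r', s'⟩⟩ := j
  simp only at *
  rw [phi_gen (a := a) (b := b) hHL hψ hw h3 h4 hq]
  by_contra hne
  have := prim_orth hHL hψ hp hq _ _ (right_ne_zero_of_mul hne)
  apply hij
  simp only [Prod.mk.injEq]
  omega

theorem phi_symm {Hgr : ℤ → ℤ → Submodule ℝ H} {N₁ N₂ w : H →ₗ[ℝ] H}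
    (hHL : IsHL Hgr N₁ N₂)
    {ψ : H →ₗ[ℝ] H →ₗ[ℝ] ℝ} (hψ : IsPolarization Hgr N₁ N₂ ψ)
    (hw : IsW Hgr N₁ N₂ w) (x y : H) : ψ x (w y) = ψ y (w x) := by
  have hx : x ∈ ⨆ i, piece Hgr N₁ N₂ i := by rw [piece_top hHL]; trivial
  have hy : y ∈ ⨆ i, piece Hgr N₁ N₂ i := by rw [piece_top hHL]; trivial
  induction hx using Submodule.iSup_induction' with
  | zero => simp
  | add x₁ x₂ _ _ h1 h2 => simp [h1, h2]
  | mem i x hx =>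
    induction hy using Submodule.iSup_induction' with
    | zero => simp
    | add x₁ x₂ _ _ h1 h2 => simp [h1, h2]
    | mem j y hy =>
      by_cases hij : i = j
      · subst hij
        rcases piece_cases hHL hx with rfl | ⟨h1, h2, p, hp, rfl⟩
        · simp
        rcases piece_cases hHL hy with rfl | ⟨h3, h4, q, hq, rfl⟩
        · simp
        rw [phi_diag hHL hψ hw h1 h2 hp, phi_diag hHL hψ hw h1 h2 hq, hψ.primSymm _ _ p hp q hq]
      · rw [piece_orth hHL hψ hw hij hx hy, piece_orth hHL hψ hw (Ne.symm hij) hy hx]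

theorem phi_pos {Hgr : ℤ → ℤ → Submodule ℝ H} {N₁ N₂ w : H →ₗ[ℝ] H}
    (hHL : IsHL Hgr N₁ N₂)
    {ψ : H →ₗ[ℝ] H →ₗ[ℝ] ℝ} (hψ : IsPolarization Hgr N₁ N₂ ψ)
    (hw : IsW Hgr N₁ N₂ w) (x : H) (hx0 : x ≠ 0) : 0 < ψ x (w x) := by
  have hx : x ∈ ⨆ i, piece Hgr N₁ N₂ i := by rw [piece_top hHL]; trivial
  obtain ⟨f, hf, rfl⟩ := (Submodule.mem_iSup_iff_exists_finsupp _ _).1 hx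
  have hpos : ∀ i, f i ≠ 0 → 0 < ψ (f i) (w (f i)) := by
    intro i hi
    rcases piece_cases hHL (hf i) with h | ⟨h1, h2, p, hp, h⟩
    · exact absurd h hi
    · rw [h, phi_diag hHL hψ hw h1 h2 hp]
      refine mul_pos (cw_pos _ _ _ _) (hψ.primPosDef _ _ p hp ?_)
      rintro rfl
      apply hi; rw [h]; simp
  have hsum : ψ (f.sum fun _ x => x) (w (f.sum fun _ x => x)) =
      ∑ i ∈ f.support, ψ (f i) (w (f i)) := by
    simp only [Finsupp.sum, map_sum, LinearMap.sum_apply]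
    refine Finset.sum_congr rfl fun i hi => ?_
    refine Finset.sum_eq_single_of_mem i hi fun j _ hji => ?_
    exact piece_orth hHL hψ hw hji (hf j) (hf i)
  rw [hsum]
  refine Finset.sum_pos (fun i hi => hpos i (Finsupp.mem_support_iff.1 hi)) ?_
  rw [Finset.nonempty_iff_ne_empty]
  intro he
  apply hx0
  simp [Finsupp.sum, he]

theorem gen_mem {Hgr : ℤ → ℤ → Submodule ℝ H} {N₁ N₂ : H →ₗ[ℝ] H}
    (hHL : IsHL Hgr N₁ N₂) {a b : ℕ} {p : H} (hp : p ∈ prim Hgr N₁ N₂ a b) (m n : ℕ) :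
    (N₁ ^ m) ((N₂ ^ n) p) ∈ Hgr ((a : ℤ) - 2 * m) ((b : ℤ) - 2 * n) :=
  pow_mem_gr (fun k => Hgr k ((b : ℤ) - 2 * n)) N₁ (fun k x hx => hHL.mapN₁ k _ x hx) m _ _
    (pow_mem_gr (fun k => Hgr a k) N₂ (fun k x hx => hHL.mapN₂ _ k x hx) n _ _ hp.1.1)

theorem w_mem {Hgr : ℤ → ℤ → Submodule ℝ H} {N₁ N₂ w : H →ₗ[ℝ] H}
    (hHL : IsHL Hgr N₁ N₂) (hw : IsW Hgr N₁ N₂ w) (k l : ℤ) :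
    Hgr k l ≤ (Hgr (-k) (-l)).comap w := by
  refine span_hom hHL k l _ ?_
  intro a b r s hr hs hk hl p hp
  rw [Submodule.mem_comap, w_apply hw hr hs hp]
  refine Submodule.smul_mem _ _ ?_
  have := gen_mem hHL hp (a - r) (b - s)
  convert this using 2 <;> omega

theorem winv_mem {Hgr : ℤ → ℤ → Submodule ℝ H} {N₁ N₂ w winv : H →ₗ[ℝ] H}
    (hHL : IsHL Hgr N₁ N₂) (hw : IsW Hgr N₁ N₂ w) (hi : winv ∘ₗ w = LinearMap.id) (k l : ℤ) :
    Hgr k l ≤ (Hgr (-k) (-l)).comap winv := by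
  refine span_hom hHL k l _ ?_
  intro a b r s hr hs hk hl p hp
  rw [Submodule.mem_comap]
  have h1 := w_apply hw (Nat.sub_le a r) (Nat.sub_le b s) hp
  have h2 := congrArg winv h1
  rw [← LinearMap.comp_apply winv w, hi, LinearMap.id_apply, map_smul, Nat.sub_sub_self hr,
    Nat.sub_sub_self hs] at h2
  have hc : ((-1 : ℝ) ^ (a - r + (b - s)) * cw a b (a - r) (b - s)) ≠ 0 :=
    mul_ne_zero (pow_ne_zero _ (by norm_num)) (cw_pos _ _ _ _).ne'
  have := gen_mem hHL hp (a - r) (b - s)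
  rw [h2, Submodule.smul_mem_iff _ hc] at this
  convert this using 2 <;> omega

end HLS

open HLS in
/-- let `d` be a differential on a polarized bigraded Hodge–Lefschetz
structure `(H, N₁, N₂, ψ)`. Then, with `φ(x,y) = ψ(x, w y)`, `d* = -w⁻¹ d w` and
`Δ = d d* + d* d`: (i) `d*` is the `φ`-adjoint of `d`; (ii) `Δ` is `φ`-symmetric; and
(iii) for every `(a,b)`, `ker(d) ∩ H_{a,b} = (ker(Δ) ∩ H_{a,b}) ⊕ (im(d) ∩ H_{a,b})`,
orthogonally for `φ`. -/
theorem statement14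
    {H : Type} [AddCommGroup H] [Module ℝ H]
    (Hgr : ℤ → ℤ → Submodule ℝ H) (N₁ N₂ : H →ₗ[ℝ] H)
    (hHL : IsHL Hgr N₁ N₂)
    (ψ : H →ₗ[ℝ] H →ₗ[ℝ] ℝ) (hψ : IsPolarization Hgr N₁ N₂ ψ)
    (w : H →ₗ[ℝ] H) (hw : IsW Hgr N₁ N₂ w)
    (winv : H →ₗ[ℝ] H) (hwinv : winv ∘ₗ w = LinearMap.id ∧ w ∘ₗ winv = LinearMap.id)
    (dd : H →ₗ[ℝ] H) (hd : IsDifferential Hgr N₁ N₂ ψ dd) :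
    -- (i) `d*` is adjoint to `d` with respect to `φ`
    (∀ x y : H, ψ x (w (dstar w winv dd y)) = ψ (dd x) (w y)) ∧
    -- (ii) `Δ` is symmetric for `φ`
    (∀ x y : H, ψ (lap w winv dd x) (w y) = ψ x (w (lap w winv dd y))) ∧
    -- (iii) the `φ`-orthogonal decomposition `ker d ∩ H_{a,b} = (ker Δ ∩ H_{a,b}) ⊕ (im d ∩ H_{a,b})`
    (∀ a b : ℤ,
      (LinearMap.ker dd ⊓ Hgr a b =
        (LinearMap.ker (lap w winv dd) ⊓ Hgr a b) ⊔ (LinearMap.range dd ⊓ Hgr a b)) ∧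
      Disjoint (LinearMap.ker (lap w winv dd) ⊓ Hgr a b)
        (LinearMap.range dd ⊓ Hgr a b) ∧
      (∀ x ∈ LinearMap.ker (lap w winv dd) ⊓ Hgr a b,
        ∀ y ∈ LinearMap.range dd ⊓ Hgr a b, ψ x (w y) = 0)) := by
  have := hHL.findim
  have hsym := phi_symm hHL hψ hw
  have hpos := phi_pos hHL hψ hw
  have hwd : ∀ y, w (dstar w winv dd y) = - dd (w y) := by
    intro y
    have := LinearMap.congr_fun hwinv.2 (dd (w y))
    simp only [LinearMap.comp_apply, LinearMap.id_apply] at this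
    simp [dstar, this]
  have hadj : ∀ x y : H, ψ x (w (dstar w winv dd y)) = ψ (dd x) (w y) := by
    intro x y
    rw [hwd, map_neg, eq_neg_of_add_eq_zero_left (hd.skew x (w y))]
  have hadj' : ∀ x y : H, ψ (dstar w winv dd x) (w y) = ψ x (w (dd y)) := by
    intro x y
    rw [hsym, hadj, hsym]
  have hlap : ∀ x, lap w winv dd x = dd (dstar w winv dd x) + dstar w winv dd (dd x) :=
    fun x => rfl
  have hnn : ∀ x, 0 ≤ ψ x (w x) := by
    intro x
    by_cases h : x = 0
    · simp [h]
    · exact (hpos x h).le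
  have hz : ∀ x, ψ x (w x) = 0 → x = 0 := by
    intro x h
    by_contra hx
    exact (hpos x hx).ne' h
  have hker : ∀ x, lap w winv dd x = 0 → dd x = 0 ∧ dstar w winv dd x = 0 := by
    intro x hx
    have h1 : ψ x (w (lap w winv dd x)) = 0 := by rw [hx]; simp
    rw [hlap, map_add, map_add, hadj, ← hadj' x] at h1
    have h2 := hnn (dd x)
    have h3 := hnn (dstar w winv dd x)
    exact ⟨hz _ (by linarith), hz _ (by linarith)⟩
  have hdeg : ∀ a b : ℤ, ∀ x ∈ Hgr a b, dd (dstar w winv dd x) ∈ Hgr a b := by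
    intro a b x hx
    have h1 := hd.mem _ _ _ (w_mem hHL hw a b hx)
    have h2 := winv_mem hHL hw hwinv.1 _ _ h1
    have h3 := hd.mem _ _ _ (Submodule.neg_mem _ h2)
    have e1 : -(-a - 1) - 1 = a := by ring
    have e2 : -(-b - 1) - 1 = b := by ring
    rw [e1, e2] at h3
    exact h3
  have horth : ∀ a b : ℤ, ∀ x ∈ LinearMap.ker (lap w winv dd) ⊓ Hgr a b,
        ∀ y ∈ LinearMap.range dd ⊓ Hgr a b, ψ x (w y) = 0 := by
    rintro a b x ⟨hx, -⟩ y ⟨⟨z, rfl⟩, -⟩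
    rw [← hadj', (hker x hx).2]; simp
  refine ⟨hadj, ?_, fun a b => ⟨?_, ?_, horth a b⟩⟩
  · intro x y
    rw [hlap, hlap]
    simp only [map_add, LinearMap.add_apply]
    rw [hadj x, hadj' (dd x), ← hadj (dstar w winv dd x), hadj' x]
  · apply le_antisymm
    · rintro x ⟨hx, hxab⟩
      let φ : LinearMap.BilinForm ℝ H := ψ.compl₂ w
      have hφ : ∀ x y, φ x y = ψ x (w y) := fun x y => rfl
      have hrefl : φ.IsRefl := by
        intro x y h
        rw [hφ, hsym, ← hφ]; exact h
      set K : Submodule ℝ H := LinearMap.range dd ⊓ Hgr a b with hK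
      have hnd : (φ.restrict K).Nondegenerate := by
        refine ⟨?_, ?_⟩ <;>
        · intro m hm
          have := hm m
          exact Subtype.ext (hz _ this)
      have hc := LinearMap.BilinForm.isCompl_orthogonal_of_restrict_nondegenerate hrefl hnd
      have hxt : x ∈ K ⊔ φ.orthogonal K := by rw [hc.sup_eq_top]; trivial
      obtain ⟨y, hy, h, hh, rfl⟩ := Submodule.mem_sup.1 hxt
      rw [add_comm]
      refine Submodule.add_mem_sup ⟨?_, ?_⟩ hy
      · have hdy : dd y = 0 := by
          obtain ⟨⟨z, rfl⟩, -⟩ := hy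
          exact hd.sq z
        have hdh : dd h = 0 := by
          have := LinearMap.mem_ker.1 hx
          rwa [map_add, hdy, zero_add] at this
        have hhab : h ∈ Hgr a b := by
          have := Submodule.sub_mem _ hxab hy.2
          simpa using this
        have h0 : ψ (dd (dstar w winv dd h)) (w h) = 0 :=
          hh _ ⟨⟨_, rfl⟩, hdeg a b h hhab⟩
        rw [← hadj] at h0
        rw [SetLike.mem_coe, LinearMap.mem_ker, hlap, hdh, hz _ h0]; simp
      · have := Submodule.sub_mem _ hxab hy.2
        simpa using this
    · refine sup_le ?_ ?_
      · rintro x ⟨hx, hxab⟩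
        exact ⟨(hker x hx).1, hxab⟩
      · rintro x ⟨⟨z, rfl⟩, hxab⟩
        exact ⟨hd.sq z, hxab⟩
  · rw [Submodule.disjoint_def]
    intro x hx hx'
    exact hz x (horth a b x hx x hx')
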